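/- arXiv:1002.2352 — 2 statements merged into one kernel-verified Lean document; each statement's English description precedes it below -/
import Mathlib

section
/- Let A be a 4-dimensional absolute-valued real algebra. The following are equivalent: (1) A is flexible, i.e. (xy)x = x(yx) for all x, y ∈ A; (2) A is third power-associative, i.e. (xx)x = x(xx) for all x ∈ A; (3) A satisfies (x, x², x) = 0, i.e. (x x²) x = x (x² x) for all x ∈ A; (4) A is isomorphic to ℍ or to ⁎ℍ. -/
/-!
Right multiplication by a unit vector is a linear isometry, so averaging the square of a linear
form over the unit ball shows that the norm of a finite-dimensional absolute-valued algebra is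
Euclidean. Kaplansky's trick then provides a unital norm-multiplicative product, which in dimension
four is that of `ℍ`, so the original product is `φ x * ψ y` for linear isometries `φ` and `ψ` of
`ℍ`. By Cartan–Dieudonné each of them is `x ↦ p * x * q` or `x ↦ p * star x * q` with `p` and `q` of
norm one, which gives four families of products. Up to isomorphism only two constants remain in each
family. Evaluating `(x, x², x) = 0` at `1`, at the constants, and at sums of a scalar with an
imaginary unit commuting with a constant or conjugating it to its `star`, excludes the two mixed
families and forces the constants to be `1` or `-1` in the others.
-/

/-- A bilinear map is norm-multiplicative if `‖B x y‖ = ‖x‖ * ‖y‖`. When the three spaces coincide,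
`B` is the product of an absolute-valued algebra. -/
def IsNormMultiplicative {E F G : Type*} [NormedAddCommGroup E] [NormedSpace ℝ E]
    [NormedAddCommGroup F] [NormedSpace ℝ F] [NormedAddCommGroup G] [NormedSpace ℝ G]
    (B : E →ₗ[ℝ] F →ₗ[ℝ] G) : Prop :=
  ∀ x y, ‖B x y‖ = ‖x‖ * ‖y‖

theorem IsNormMultiplicative.flip {E F G : Type*} [NormedAddCommGroup E] [NormedSpace ℝ E]
    [NormedAddCommGroup F] [NormedSpace ℝ F] [NormedAddCommGroup G] [NormedSpace ℝ G]
    {B : E →ₗ[ℝ] F →ₗ[ℝ] G} (hB : IsNormMultiplicative B) : IsNormMultiplicative B.flip :=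
  fun y x => (hB x y).trans (mul_comm _ _)

section Parallelogram

open MeasureTheory Metric Module

variable {E F : Type*} [NormedAddCommGroup E] [NormedSpace ℝ E] [MeasurableSpace E] [BorelSpace E]
  [NormedAddCommGroup F] [NormedSpace ℝ F]

theorem setIntegral_closedBall_comp_linearIsometryEquiv (T : E ≃ₗᵢ[ℝ] E) (f : E → F) (d r : ℝ) :
    ∫ a in closedBall 0 r, f (T a) ∂μH[d] = ∫ a in closedBall 0 r, f a ∂μH[d] := by
  have h := (T.toIsometryEquiv.measurePreserving_hausdorffMeasure d).setIntegral_preimage_emb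
    T.toHomeomorph.measurableEmbedding f (closedBall 0 r)
  simpa using h

theorem setIntegral_closedBall_sq_pos [FiniteDimensional ℝ E] {f : StrongDual ℝ E} (hf : f ≠ 0) :
    0 < ∫ a in closedBall 0 1, f a ^ 2 ∂μH[finrank ℝ E] := by
  have hcont : Continuous fun a => f a ^ 2 := f.continuous.pow 2
  refine (setIntegral_pos_iff_support_of_nonneg_ae (ae_of_all _ fun a => sq_nonneg (f a))
    (hcont.continuousOn.integrableOn_compact (isCompact_closedBall 0 1))).2 ?_
  obtain ⟨v, hv, hfv⟩ : ∃ v ∈ ball (0 : E) 1, f v ≠ 0 := by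
    by_contra! h
    have hker : f.ker = ⊤ := Submodule.eq_top_of_nonempty_interior' _
      ⟨0, mem_interior.2 ⟨ball 0 1, h, isOpen_ball, mem_ball_self one_pos⟩⟩
    exact hf (ContinuousLinearMap.coe_injective (LinearMap.ker_eq_top.1 hker))
  have hopen := hcont.isOpen_support.inter (isOpen_ball (x := (0 : E)) (ε := 1))
  exact (hopen.measure_pos _ ⟨v, by simpa using hfv, hv⟩).trans_le
    (measure_mono (Set.inter_subset_inter_right _ ball_subset_closedBall))

namespace IsNormMultiplicative

theorem setIntegral_closedBall_sq_apply {B : E →ₗ[ℝ] F →ₗ[ℝ] E} (hB : IsNormMultiplicative B)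
    [FiniteDimensional ℝ E] (f : StrongDual ℝ E) (x : F) :
    ∫ a in closedBall 0 1, f (B a x) ^ 2 ∂μH[finrank ℝ E] =
      ‖x‖ ^ 2 * ∫ a in closedBall 0 1, f a ^ 2 ∂μH[finrank ℝ E] := by
  rcases eq_or_ne x 0 with rfl | hx
  · simp
  have hx' : ‖x‖ ≠ 0 := norm_ne_zero_iff.2 hx
  have hunit : ‖‖x‖⁻¹ • x‖ = 1 := norm_smul_inv_norm (𝕜 := ℝ) hx
  let R : E →ₗᵢ[ℝ] E := ⟨B.flip (‖x‖⁻¹ • x), fun a => by rw [hB.flip, hunit, one_mul]⟩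
  have hR := setIntegral_closedBall_comp_linearIsometryEquiv (R.toLinearIsometryEquiv rfl)
    (fun a => f a ^ 2) (finrank ℝ E) 1
  rw [← hR, ← integral_const_mul]
  congr 1 with a
  simp [R, mul_pow, hx']

/-- Averaging `a ↦ f (B a x) ^ 2` over the unit ball gives a quadratic form in `x` proportional to
`‖x‖ ^ 2`, because right multiplication by a unit vector is an isometry. -/
theorem parallelogram [Nontrivial E] [FiniteDimensional ℝ E] {B : E →ₗ[ℝ] F →ₗ[ℝ] E}
    (hB : IsNormMultiplicative B) (x y : F) :
    ‖x + y‖ * ‖x + y‖ + ‖x - y‖ * ‖x - y‖ = 2 * (‖x‖ * ‖x‖ + ‖y‖ * ‖y‖) := by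
  obtain ⟨f, hf⟩ := exists_ne (0 : StrongDual ℝ E)
  let q : F → ℝ := fun x => ∫ a in closedBall 0 1, f (B a x) ^ 2 ∂μH[finrank ℝ E]
  have hsq (x : F) : IntegrableOn (fun a => f (B a x) ^ 2) (closedBall 0 1) μH[finrank ℝ E] :=
    ((f.continuous.comp (B.flip x).continuous_of_finiteDimensional).pow 2).continuousOn
      |>.integrableOn_compact (isCompact_closedBall 0 1)
  have hq : q (x + y) + q (x - y) = 2 * (q x + q y) := by
    simp only [q]
    rw [← integral_add (hsq _) (hsq _), ← integral_add (hsq _) (hsq _), ← integral_const_mul]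
    congr 1 with a
    simp only [map_add, map_sub]
    ring
  simp only [q, hB.setIntegral_closedBall_sq_apply] at hq
  refine mul_right_cancel₀ (setIntegral_closedBall_sq_pos hf).ne' ?_
  linear_combination hq

end IsNormMultiplicative

end Parallelogram

theorem exists_norm_eq_one_forall_inner_eq_zero {𝕜 H : Type*} [RCLike 𝕜] [NormedAddCommGroup H]
    [InnerProductSpace 𝕜 H] (s : Finset H) (hs : s.card < Module.finrank 𝕜 H) :
    ∃ v : H, ‖v‖ = 1 ∧ ∀ x ∈ s, inner 𝕜 x v = 0 := by
  have : FiniteDimensional 𝕜 H := .of_finrank_pos (by omega)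
  let S := Submodule.span 𝕜 (s : Set H)
  have hS : S ≠ ⊤ := fun h => by
    have hle : Module.finrank 𝕜 S ≤ s.card := finrank_span_finset_le_card s
    rw [h, finrank_top] at hle
    omega
  obtain ⟨v, hv, hv0⟩ := Submodule.exists_mem_ne_zero_of_ne_bot
    (mt S.orthogonal_eq_bot_iff.1 hS)
  refine ⟨(‖v‖⁻¹ : 𝕜) • v, norm_smul_inv_norm hv0, fun x hx => ?_⟩
  rw [inner_smul_right, hv x (Submodule.subset_span hx), mul_zero]

section Euclidean

variable {E F G : Type*} [NormedAddCommGroup E] [InnerProductSpace ℝ E]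
  [NormedAddCommGroup F] [InnerProductSpace ℝ F] [NormedAddCommGroup G] [InnerProductSpace ℝ G]

namespace IsNormMultiplicative

theorem inner_apply_left {B : E →ₗ[ℝ] F →ₗ[ℝ] G} (hB : IsNormMultiplicative B) (x : E) (y z : F) :
    inner ℝ (B x y) (B x z) = ‖x‖ ^ 2 * inner ℝ y z := by
  have h := norm_add_sq_real (B x y) (B x z)
  rw [← map_add, hB, hB, hB] at h
  linear_combination (-1 / 2) * h + ‖x‖ ^ 2 / 2 * norm_add_sq_real y z

theorem inner_apply_add_inner_apply {B : E →ₗ[ℝ] F →ₗ[ℝ] G} (hB : IsNormMultiplicative B)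
    (w x : E) (y z : F) :
    inner ℝ (B w y) (B x z) + inner ℝ (B x y) (B w z) = 2 * inner ℝ w x * inner ℝ y z := by
  have h := hB.inner_apply_left (w + x) y z
  simp only [map_add, LinearMap.add_apply, inner_add_left, inner_add_right, hB.inner_apply_left,
    norm_add_sq_real] at h
  linear_combination h

variable {mul : E →ₗ[ℝ] E →ₗ[ℝ] E} {u a b : E}

theorem inner_apply_eq_neg (hmul : IsNormMultiplicative mul) (hu : ∀ x, mul u x = x)
    (ha : inner ℝ u a = 0) (x y : E) : inner ℝ (mul a x) y = -inner ℝ x (mul a y) := by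
  have h := hmul.inner_apply_add_inner_apply u a x y
  rw [hu, hu, ha] at h
  linear_combination h

theorem apply_apply_self (hmul : IsNormMultiplicative mul) (hu : ∀ x, mul u x = x)
    (ha : inner ℝ u a = 0) (x : E) : mul a (mul a x) = -(‖a‖ ^ 2 • x) := by
  refine ext_inner_right ℝ fun y => ?_
  rw [hmul.inner_apply_eq_neg hu ha, hmul.inner_apply_left, inner_neg_left, real_inner_smul_left]

theorem apply_eq_neg_apply (hmul : IsNormMultiplicative mul) (hul : ∀ x, mul u x = x)
    (hur : ∀ x, mul x u = x) (ha : inner ℝ u a = 0) (hb : inner ℝ u b = 0)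
    (hab : inner ℝ a b = 0) : mul b a = -mul a b := by
  have sq_eq {c : E} (hc : inner ℝ u c = 0) : mul c c = -(‖c‖ ^ 2 • u) := by
    simpa only [hur] using hmul.apply_apply_self hul hc u
  have h := sq_eq (c := a + b) (by rw [inner_add_right, ha, hb, add_zero])
  rw [norm_add_sq_real, hab] at h
  simp only [map_add, LinearMap.add_apply, sq_eq ha, sq_eq hb] at h
  linear_combination (norm := module) h

theorem orthonormal_quaternion_basis (hmul : IsNormMultiplicative mul) (hul : ∀ x, mul u x = x)
    (hur : ∀ x, mul x u = x) (hu : ‖u‖ = 1) (ha : ‖a‖ = 1) (hb : ‖b‖ = 1) (hua : inner ℝ u a = 0)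
    (hub : inner ℝ u b = 0) (hab : inner ℝ a b = 0) :
    Orthonormal ℝ ![u, a, b, mul a b] := by
  have hu_ab : inner ℝ u (mul a b) = 0 := by
    rw [real_inner_comm, hmul.inner_apply_eq_neg hul hua, hur, real_inner_comm, hab, neg_zero]
  have ha_ab : inner ℝ a (mul a b) = 0 := by
    simpa only [hur, hub, mul_zero] using hmul.inner_apply_left a u b
  have hb_ab : inner ℝ b (mul a b) = 0 := by
    simpa only [LinearMap.flip_apply, hul, hua, mul_zero] using hmul.flip.inner_apply_left b u a
  refine ⟨fun n => ?_, fun m n hmn => ?_⟩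
  · fin_cases n <;> simp [hu, ha, hb, hmul a b]
  · fin_cases m <;> fin_cases n <;> first
      | exact absurd rfl hmn
      | simpa
      | simpa [real_inner_comm]

end IsNormMultiplicative

end Euclidean

namespace IsNormMultiplicative

variable {E : Type*} [NormedAddCommGroup E] [InnerProductSpace ℝ E] {mul : E →ₗ[ℝ] E →ₗ[ℝ] E}

theorem exists_quaternion_linearIsometryEquiv (hmul : IsNormMultiplicative mul)
    (hdim : Module.finrank ℝ E = 4) {u : E} (hu : ‖u‖ = 1) (hul : ∀ x, mul u x = x)
    (hur : ∀ x, mul x u = x) :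
    ∃ e : Quaternion ℝ ≃ₗᵢ[ℝ] E, ∀ p q, e (p * q) = mul (e p) (e q) := by
  classical
  obtain ⟨i, hi, hui⟩ : ∃ i : E, ‖i‖ = 1 ∧ inner ℝ u i = 0 := by
    simpa using exists_norm_eq_one_forall_inner_eq_zero {u} (by simp [hdim])
  obtain ⟨j, hj, huj, hij⟩ : ∃ j : E, ‖j‖ = 1 ∧ inner ℝ u j = 0 ∧ inner ℝ i j = 0 := by
    simpa using exists_norm_eq_one_forall_inner_eq_zero {u, i}
      ((Finset.card_insert_le _ _).trans_lt (by simp [hdim]))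
  have horth := hmul.orthonormal_quaternion_basis hul hur hu hi hj hui huj hij
  let basis := (basisOfOrthonormalOfCardEqFinrank horth (by simp [hdim])).toOrthonormalBasis
    (by simpa using horth)
  let e := Quaternion.linearIsometryEquivTuple.trans basis.repr.symm
  have he (q : Quaternion ℝ) :
      e q = q.re • u + q.imI • i + q.imJ • j + q.imK • mul i j := by
    simp [e, basis, ← OrthonormalBasis.sum_repr_symm, Fin.sum_univ_four]
  have left {a : E} (ha : ‖a‖ = 1) (hua : inner ℝ u a = 0) (x : E) : mul a (mul a x) = -x := by
    rw [hmul.apply_apply_self hul hua, ha, one_pow, one_smul]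
  have right {a : E} (ha : ‖a‖ = 1) (hua : inner ℝ u a = 0) (x : E) : mul (mul x a) a = -x :=
    hmul.flip.apply_apply_self hur hua x |>.trans (by rw [ha, one_pow, one_smul])
  have sq {a : E} (ha : ‖a‖ = 1) (hua : inner ℝ u a = 0) : mul a a = -u := by
    simpa only [hur] using left ha hua u
  have hji : mul j i = -mul i j := hmul.apply_eq_neg_apply hul hur hui huj hij
  have hkk : mul (mul i j) (mul i j) = -u :=
    sq (horth.1 3) (horth.2 (by decide : (0 : Fin 4) ≠ 3))
  have hjk : mul j (mul i j) = i := by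
    rw [← neg_neg (mul i j), ← hji, map_neg, left hj huj, neg_neg]
  have hki : mul (mul i j) i = j := by
    rw [← neg_neg (mul i j), ← hji, map_neg, LinearMap.neg_apply, right hi hui, neg_neg]
  refine ⟨e, fun p q => ?_⟩
  simp only [he, map_add, map_smul, LinearMap.add_apply, LinearMap.smul_apply, hul, hur, hji, hjk,
    hki, hkk, left hi hui, right hj huj, sq hi hui, sq hj huj, Quaternion.re_mul,
    Quaternion.imI_mul, Quaternion.imJ_mul, Quaternion.imK_mul]
  module

/-- Kaplansky's trick: for a unit vector `a`, the product `R⁻¹ x * L⁻¹ y` has unit `a * a`, where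
`L` and `R` are the multiplications by `a`. -/
theorem exists_quaternion_isotope (hmul : IsNormMultiplicative mul)
    (hdim : Module.finrank ℝ E = 4) :
    ∃ (e : E ≃ₗᵢ[ℝ] Quaternion ℝ) (φ ψ : Quaternion ℝ ≃ₗᵢ[ℝ] Quaternion ℝ),
      ∀ x y, e (mul x y) = φ (e x) * ψ (e y) := by
  have : FiniteDimensional ℝ E := .of_finrank_pos (by omega)
  have : Nontrivial E := Module.finrank_pos_iff.1 (by omega : 0 < Module.finrank ℝ E)
  obtain ⟨a, ha⟩ := exists_norm_eq E zero_le_one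
  let L : E ≃ₗᵢ[ℝ] E :=
    LinearIsometry.toLinearIsometryEquiv ⟨mul a, fun x => by rw [hmul, ha, one_mul]⟩ rfl
  let R : E ≃ₗᵢ[ℝ] E :=
    LinearIsometry.toLinearIsometryEquiv ⟨mul.flip a, fun x => by rw [hmul.flip, ha, one_mul]⟩ rfl
  let unitalMul : E →ₗ[ℝ] E →ₗ[ℝ] E :=
    mul.compl₁₂ (R.symm.toLinearEquiv : E →ₗ[ℝ] E) (L.symm.toLinearEquiv : E →ₗ[ℝ] E)
  have unitalMul_apply (x y : E) : unitalMul x y = mul (R.symm x) (L.symm y) := rfl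
  have hL : L.symm (mul a a) = a := L.symm_apply_apply a
  have hR : R.symm (mul a a) = a := R.symm_apply_apply a
  have hunital : IsNormMultiplicative unitalMul := fun x y => by
    rw [unitalMul_apply, hmul, R.symm.norm_map, L.symm.norm_map]
  obtain ⟨e, he⟩ := hunital.exists_quaternion_linearIsometryEquiv hdim (u := mul a a)
    (by rw [hmul, ha, one_mul])
    (fun x => by rw [unitalMul_apply, hR]; exact L.apply_symm_apply x)
    (fun x => by rw [unitalMul_apply, hL]; exact R.apply_symm_apply x)
  refine ⟨e.symm, (e.trans R).trans e.symm, (e.trans L).trans e.symm, fun x y => ?_⟩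
  apply e.injective
  simp [he, unitalMul_apply]

end IsNormMultiplicative
section Quaternion

open Quaternion

variable {a b j : ℍ[ℝ]}

theorem star_mul_self_eq_one (ha : ‖a‖ = 1) : star a * a = 1 := by
  rw [Quaternion.star_mul_self, Quaternion.normSq_eq_norm_mul_self, ha, mul_one, Quaternion.coe_one]

theorem mul_star_self_eq_one (ha : ‖a‖ = 1) : a * star a = 1 := by
  simpa using star_mul_self_eq_one (a := star a) (by simpa)

theorem star_mul_cancel_left (ha : ‖a‖ = 1) (x : ℍ[ℝ]) : star a * (a * x) = x := by
  rw [← mul_assoc, star_mul_self_eq_one ha, one_mul]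

theorem mul_star_cancel_left (ha : ‖a‖ = 1) (x : ℍ[ℝ]) : a * (star a * x) = x := by
  rw [← mul_assoc, mul_star_self_eq_one ha, one_mul]

theorem eq_one_or_neg_one_of_star_eq (ha : ‖a‖ = 1) (hstar : star a = a) : a = 1 ∨ a = -1 :=
  mul_self_eq_one_iff.1 (by simpa only [hstar] using mul_star_self_eq_one ha)

theorem mul_star_mul_self (x y : ℍ[ℝ]) :
    x * star y * x = (2 * inner ℝ x y) • x - ‖x‖ ^ 2 • y := by
  have h : x * star y + y * star x = ((2 * inner ℝ x y : ℝ) : ℍ[ℝ]) := by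
    rw [Quaternion.inner_def, ← Quaternion.self_add_star', star_mul, star_star]
  rw [eq_sub_of_add_eq h, sub_mul, mul_assoc, Quaternion.star_mul_self,
    Quaternion.normSq_eq_norm_mul_self, ← Quaternion.coe_mul_eq_smul,
    ← Quaternion.mul_coe_eq_smul, sq]

theorem reflection_orthogonal_span_singleton_eq_neg_mul_star_mul {v : ℍ[ℝ]} (hv : v ≠ 0)
    (x : ℍ[ℝ]) : (ℝ ∙ v)ᗮ.reflection x = -((‖v‖ ^ 2)⁻¹ • (v * star x * v)) := by
  have hv' : ‖v‖ ^ 2 ≠ 0 := pow_ne_zero 2 (norm_ne_zero_iff.2 hv)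
  rw [Submodule.reflection_orthogonal_apply, Submodule.reflection_singleton_apply,
    mul_star_mul_self, smul_sub, inv_smul_smul₀ hv']
  simp only [RCLike.ofReal_real_eq_id, id]
  match_scalars <;> field_simp

theorem exists_forall_apply_eq_mul_mul_or_mul_star_mul (φ : ℍ[ℝ] ≃ₗᵢ[ℝ] ℍ[ℝ]) :
    ∃ p q : ℍ[ℝ], ‖p‖ = 1 ∧ ‖q‖ = 1 ∧
      ((∀ x, φ x = p * x * q) ∨ ∀ x, φ x = p * star x * q) := by
  obtain ⟨l, -, rfl⟩ := φ.reflections_generate_dim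
  induction l with
  | nil => exact ⟨1, 1, norm_one, norm_one, .inl fun x => by simp⟩
  | cons v l ih =>
    obtain ⟨p, q, hp, hq, h⟩ := ih
    rcases eq_or_ne v 0 with rfl | hv
    · exact ⟨p, q, hp, hq, by simpa [Submodule.reflection_mem_subspace_eq_self] using h⟩
    let u := ‖v‖⁻¹ • v
    have hu : ‖u‖ = 1 := norm_smul_inv_norm hv
    have hcons (x : ℍ[ℝ]) : ((v :: l).map fun v => (ℝ ∙ v)ᗮ.reflection).prod x =
        -(u * star ((l.map fun v => (ℝ ∙ v)ᗮ.reflection).prod x) * u) := by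
      rw [List.map_cons, List.prod_cons, LinearIsometryEquiv.coe_mul, Function.comp_apply,
        reflection_orthogonal_span_singleton_eq_neg_mul_star_mul hv]
      simp [u, smul_smul, sq]
    refine ⟨-(u * star q), star p * u, by simp [hu, hq], by simp [hu, hp], ?_⟩
    rcases h with h | h
    · exact .inr fun x => by rw [hcons, h]; simp [mul_assoc]
    · exact .inl fun x => by rw [hcons, h]; simp [mul_assoc]

theorem semiconjBy_star_of_inner_eq_zero (ha : inner ℝ 1 a = 0) (hab : inner ℝ a b = 0) :
    SemiconjBy a b (star b) := by
  have ha_re : a.re = 0 := by simpa [Quaternion.inner_def] using ha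
  have hab_re : (a * b).re = 0 := by
    simp only [Quaternion.inner_def, Quaternion.re_mul, Quaternion.re_star, Quaternion.imI_star,
      Quaternion.imJ_star, Quaternion.imK_star] at hab ⊢
    linear_combination 2 * ha_re * b.re - hab
  have hstar := Quaternion.star_eq_neg.2 hab_re
  rw [star_mul, Quaternion.star_eq_neg.2 ha_re, mul_neg, neg_inj] at hstar
  exact hstar.symm

theorem exists_imaginary_unit_semiconjBy_star (b c : ℍ[ℝ]) :
    ∃ j : ℍ[ℝ], j * j = -1 ∧ star j = -j ∧ SemiconjBy j b (star b) ∧ SemiconjBy j c (star c) := by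
  classical
  obtain ⟨j, hj, h1, hb, hc⟩ : ∃ j : ℍ[ℝ], ‖j‖ = 1 ∧ inner ℝ 1 j = 0 ∧ inner ℝ b j = 0 ∧
      inner ℝ c j = 0 := by
    simpa using exists_norm_eq_one_forall_inner_eq_zero (𝕜 := ℝ) {1, b, c}
      (Finset.card_le_three.trans_lt (by simp [Quaternion.finrank_eq_four]))
  have hstar : star j = -j := Quaternion.star_eq_neg.2 (by simpa [Quaternion.inner_def] using h1)
  refine ⟨j, ?_, hstar, ?_, ?_⟩
  · simpa [hstar, neg_eq_iff_eq_neg] using mul_star_self_eq_one hj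
  · exact semiconjBy_star_of_inner_eq_zero h1 (by rwa [real_inner_comm])
  · exact semiconjBy_star_of_inner_eq_zero h1 (by rwa [real_inner_comm])

theorem exists_imaginary_unit_commute (b : ℍ[ℝ]) :
    ∃ n : ℍ[ℝ], n * n = -1 ∧ star n = -n ∧ Commute n b := by
  obtain ⟨j, hj, hj_star, hjb, -⟩ := exists_imaginary_unit_semiconjBy_star (star b) 0
  obtain ⟨k, hk, hk_star, hkb, hkj⟩ := exists_imaginary_unit_semiconjBy_star b j
  replace hkj : k * j = -(j * k) := by rw [hkj.eq, hj_star, neg_mul]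
  rw [star_star] at hjb
  refine ⟨j * k, ?_, by simp [hj_star, hk_star, hkj], hjb.mul_left hkb⟩
  calc j * k * (j * k) = j * (k * j) * k := by simp only [mul_assoc]
    _ = -(j * j * (k * k)) := by rw [hkj]; noncomm_ring
    _ = -1 := by rw [hj, hk]; simp

theorem star_eq_self_of_semiconjBy_of_commute (hj : j * j = -1) (h : SemiconjBy j a (star a))
    (hcomm : Commute j a) : star a = a := by
  have hj0 : j ≠ 0 := by rintro rfl; simp at hj
  exact mul_right_cancel₀ hj0 (h.eq.symm.trans hcomm)

end Quaternion

theorem eq_of_forall_natCast_add_mul {R : Type*} [Ring R] [IsAddTorsionFree R] {v w : R}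
    (hv : v * v = -1) (hw : w * w = -1)
    (h : ∀ n : ℕ,
      (n + v) * (n + v) * ((n + w) * (n + v)) = (n + w) * (n + v) * ((n + w) * (n + w))) :
    v = w := by
  have hcoeff (n : ℕ) (hn : n ≠ 0) : n ^ 2 • v + v * w * v = n ^ 2 • w + w * v * w := by
    have hn' := h n
    refine nsmul_right_injective (mul_ne_zero two_ne_zero hn) ?_
    simp only [← nsmul_one, add_mul, mul_add, smul_mul_assoc, mul_smul_comm, one_mul, mul_one,
      mul_assoc, hv, hw, mul_neg, neg_mul] at hn' ⊢
    linear_combination (norm := module) hn'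
  refine nsmul_right_injective three_ne_zero ?_
  linear_combination (norm := module) hcoeff 2 two_ne_zero - hcoeff 1 one_ne_zero

section Isomorphic

variable {A B C : Type*}

/-- The identity `(x, x², x) = 0` for a product `m`, where `(x, y, z) = (xy)z - x(yz)`. -/
def SquareAssociative (m : A → A → A) : Prop :=
  ∀ x, m (m x (m x x)) x = m x (m (m x x) x)

theorem SquareAssociative.swap {m : A → A → A} (h : SquareAssociative m) :
    SquareAssociative (Function.swap m) :=
  fun x => (h x).symm

variable [AddCommGroup A] [Module ℝ A] [AddCommGroup B] [Module ℝ B] [AddCommGroup C] [Module ℝ C]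

/-- Isomorphism of the real algebras given by two products, which need be neither associative nor
unital. -/
def MulIsomorphic (m : A → A → A) (m' : B → B → B) : Prop :=
  ∃ e : A ≃ₗ[ℝ] B, ∀ x y, e (m x y) = m' (e x) (e y)

namespace MulIsomorphic

variable {m : A → A → A} {m' : B → B → B} {m'' : C → C → C}

theorem refl (m : A → A → A) : MulIsomorphic m m :=
  ⟨.refl ℝ A, fun _ _ => rfl⟩

theorem trans (h : MulIsomorphic m m') (h' : MulIsomorphic m' m'') : MulIsomorphic m m'' := by
  obtain ⟨e, he⟩ := h
  obtain ⟨e', he'⟩ := h'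
  exact ⟨e.trans e', fun x y => by simp [he, he']⟩

theorem squareAssociative (h : MulIsomorphic m m') (hm : SquareAssociative m) :
    SquareAssociative m' := by
  obtain ⟨e, he⟩ := h
  refine e.surjective.forall.2 fun x => ?_
  simp only [← he, hm x]

end MulIsomorphic

theorem mulIsomorphic_neg {m : A → A → A} (h : ∀ x y, m (-x) (-y) = m x y) :
    MulIsomorphic (fun x y => -m x y) m :=
  ⟨LinearEquiv.neg ℝ, fun x y => by simp [h]⟩

end Isomorphic

section Quaternion

open Quaternion

variable {a b c p u s : ℍ[ℝ]}

instance : CharZero ℍ[ℝ] :=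
  algebraRat.charZero _

theorem mulIsomorphic_mul_mul_mul_mul (p s : ℍ[ℝ]) (hu : ‖u‖ = 1) :
    MulIsomorphic (fun x y => p * x * u * y * s) (fun x y => u * p * star u * x * y * s) :=
  ⟨Units.mulLeftLinearEquiv ℝ ℍ[ℝ] ⟨u, star u, mul_star_self_eq_one hu, star_mul_self_eq_one hu⟩,
    fun x y => by simp [mul_assoc, star_mul_cancel_left hu]⟩

theorem mulIsomorphic_star_mul (hp : ‖p‖ = 1) (u s : ℍ[ℝ]) :
    MulIsomorphic (fun x y => p * star x * u * y * s)
      (fun x y => star x * u * y * (p * s * star p)) :=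
  ⟨Units.mulRightLinearEquiv ℝ ⟨star p, p, star_mul_self_eq_one hp, mul_star_self_eq_one hp⟩,
    fun x y => by simp [mul_assoc, star_mul_cancel_left hp]⟩

theorem mulIsomorphic_star_mul_star (hp : ‖p‖ = 1) (u s : ℍ[ℝ]) :
    MulIsomorphic (fun x y => p * star x * u * star y * s)
      (fun x y => star x * (u * star p) * star y * (s * star p)) :=
  ⟨Units.mulRightLinearEquiv ℝ ⟨star p, p, star_mul_self_eq_one hp, mul_star_self_eq_one hp⟩,
    fun x y => by simp [mul_assoc, star_mul_cancel_left hp]⟩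

theorem mulIsomorphic_swap_mul_star (p u s : ℍ[ℝ]) :
    MulIsomorphic (Function.swap fun x y => p * x * u * star y * s)
      (fun x y => star s * star x * star u * y * star p) :=
  ⟨Quaternion.starAe.toLinearEquiv.trans (MulOpposite.opLinearEquiv ℝ).symm,
    fun x y => by simp [Function.swap, mul_assoc]⟩

theorem mul_eq_of_squareAssociative_mul_mul (ha : ‖a‖ = 1) (hc : ‖c‖ = 1)
    (h : SquareAssociative fun x y => a * x * y * c) (x : ℍ[ℝ]) :
    a * x * a * x * x * c * c * x = x * a * a * x * x * c * x * c := by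
  have ha0 : a ≠ 0 := ne_zero_of_norm_ne_zero (by simp [ha])
  have hc0 : c ≠ 0 := ne_zero_of_norm_ne_zero (by simp [hc])
  refine mul_left_cancel₀ ha0 (mul_right_cancel₀ hc0 ?_)
  simpa only [mul_assoc] using h x

theorem eq_or_eq_neg_of_forall_mul_eq (ha : ‖a‖ = 1) (hc : ‖c‖ = 1)
    (h : ∀ x, a * x * a * x * x * c * c * x = x * a * a * x * x * c * x * c) : c = a ∨ c = -a := by
  have hac : Commute c a := by
    have ha0 : a ≠ 0 := ne_zero_of_norm_ne_zero (by simp [ha])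
    have hc0 : c ≠ 0 := ne_zero_of_norm_ne_zero (by simp [hc])
    have h_at_a := h a
    simp only [mul_assoc] at h_at_a
    simpa [ha0, hc0, commute_iff_eq] using h_at_a
  obtain ⟨j, hj, -, hja, hjc⟩ := exists_imaginary_unit_semiconjBy_star a c
  have h_at_j : star c * star c = star a * star a := by
    have := h j
    simp only [mul_assoc, hj, hja.eq, hjc.eq, mul_neg, mul_one] at this
    simpa [mul_star_cancel_left ha, mul_assoc, star_mul_self_eq_one hc] using this
  exact hac.mul_self_eq_mul_self_iff.1 (star_injective (by simpa only [star_mul] using h_at_j))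

theorem eq_one_or_neg_one_of_forall_mul_eq (ha : ‖a‖ = 1)
    (h : ∀ x, a * x * a * x * x * a * a * x = x * a * a * x * x * a * x * a) : a = 1 ∨ a = -1 := by
  obtain ⟨j, hj, -, hja, -⟩ := exists_imaginary_unit_semiconjBy_star a 0
  have : IsAddTorsionFree ℍ[ℝ] := .of_module_rat _
  have hconj : j = star a * j * a := by
    refine eq_of_forall_natCast_add_mul hj ?_ fun n => ?_
    · simp only [mul_assoc, mul_star_cancel_left ha]
      rw [← mul_assoc j j, hj, neg_one_mul, mul_neg, star_mul_self_eq_one ha]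
    · have hadd : n + star a * j * a = star a * (n + j) * a := by
        rw [mul_add, add_mul, ← Nat.cast_comm, mul_assoc (n : ℍ[ℝ]), star_mul_self_eq_one ha,
          mul_one]
      have h_at := h (star a * (n + j))
      simp only [mul_assoc, mul_star_cancel_left ha] at h_at
      rw [hadd]
      simpa only [mul_assoc, mul_star_cancel_left ha] using h_at
  refine eq_one_or_neg_one_of_star_eq ha (star_eq_self_of_semiconjBy_of_commute hj hja ?_)
  calc j * a = a * (star a * j * a) := by rw [mul_assoc (star a), mul_star_cancel_left ha]
    _ = a * j := by rw [← hconj]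

theorem mul_eq_of_squareAssociative_star_mul (hc : ‖c‖ = 1)
    (h : SquareAssociative fun x y => star x * b * y * c) (x : ℍ[ℝ]) :
    star c * star c * star x * star b * x * star b * x * b * x =
      star x * b * star c * star x * star b * x * b * x * c := by
  have hc0 : c ≠ 0 := ne_zero_of_norm_ne_zero (by simp [hc])
  refine mul_right_cancel₀ hc0 ?_
  simpa [mul_assoc] using h x

theorem mul_self_eq_star_mul_star_mul_mul_of_commute (hb : ‖b‖ = 1) (hc : ‖c‖ = 1)
    (h : ∀ x, star c * star c * star x * star b * x * star b * x * b * x =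
      star x * b * star c * star x * star b * x * b * x * c)
    {x : ℍ[ℝ]} (hx : x ≠ 0) (hxb : Commute x b) : x * x = star x * star c * x * c := by
  have hb0 : b ≠ 0 := ne_zero_of_norm_ne_zero (by simp [hb])
  have h_at_one : star c * (star c * star b) = b := by
    simpa [mul_assoc, star_mul_self_eq_one hb, star_mul_self_eq_one hc] using h 1
  have hxb_star : Commute x (star b) := by
    rw [eq_inv_of_mul_eq_one_left (star_mul_self_eq_one hb)]
    exact hxb.inv_right₀
  have hstar_xb : Commute (star x) b := by simpa using commute_star_star.2 hxb_star
  have hstar_xb_star : Commute (star x) (star b) := commute_star_star.2 hxb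
  have hcentral (y : ℍ[ℝ]) : Commute (star x * x) y := by
    rw [Quaternion.star_mul_self]
    exact Quaternion.coe_commute _ y
  refine mul_left_cancel₀ (mul_ne_zero (mul_ne_zero (star_ne_zero.2 hx) hx) hb0) ?_
  calc star x * x * b * (x * x) = star c * (star c * star b) * (star x * x) * (x * x) := by
        rw [h_at_one, (hcentral b).eq]
    _ = star c * star c * star x * star b * x * star b * x * b * x := by
        simp only [mul_assoc, hxb.eq, hxb_star.eq, hxb.left_comm, hstar_xb.left_comm,
          hstar_xb_star.left_comm, star_mul_cancel_left hb]
    _ = star x * b * star c * star x * star b * x * b * x * c := h x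
    _ = b * star x * star c * (star x * x) * x * c := by
        simp only [mul_assoc, hxb.left_comm, hstar_xb.left_comm, star_mul_cancel_left hb]
    _ = star x * x * b * (star x * star c * x * c) := by
        rw [← (hcentral _).eq]; simp only [mul_assoc]

theorem one_add_ne_zero_of_mul_self_eq_neg_one {R : Type*} [Ring R] [CharZero R] {n : R}
    (hn : n * n = -1) : 1 + n ≠ 0 := by
  intro h
  rw [eq_neg_of_add_eq_zero_right h] at hn
  norm_num at hn

theorem not_squareAssociative_star_mul (hb : ‖b‖ = 1) (hc : ‖c‖ = 1) :
    ¬ SquareAssociative fun x y => star x * b * y * c := by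
  intro h
  obtain ⟨n, hn, hn_star, hnb⟩ := exists_imaginary_unit_commute b
  have hnorm : (1 + n) * (1 - n) = 2 := calc
    (1 + n) * (1 - n) = 1 - n * n := by noncomm_ring
    _ = 2 := by rw [hn]; norm_num
  have h_at := mul_self_eq_star_mul_star_mul_mul_of_commute hb hc
    (mul_eq_of_squareAssociative_star_mul hc h)
    (one_add_ne_zero_of_mul_self_eq_neg_one hn) ((Commute.one_left b).add_left hnb)
  have hconj : n - 1 = 1 + star c * n * c := by
    refine mul_left_cancel₀ (two_ne_zero (α := ℍ[ℝ])) ?_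
    calc 2 * (n - 1) = 2 * n + 2 * (n * n) := by rw [hn]; noncomm_ring
      _ = (1 + n) * ((1 + n) * (1 + n)) - (1 + n) * (1 + n * n) := by noncomm_ring
      _ = (1 + n) * (1 - n) * (star c * (1 + n) * c) := by
          rw [h_at, hn, star_add, star_one, hn_star]
          simp only [← sub_eq_add_neg, sub_self, mul_zero, sub_zero, mul_assoc]
      _ = 2 * (1 + star c * n * c) := by
          rw [hnorm, mul_add, add_mul, mul_one, star_mul_self_eq_one hc]
  have hstar : -n - 1 = 1 - star c * n * c := by
    simpa [hn_star, mul_assoc, sub_eq_add_neg] using congrArg star hconj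
  have htwo : (-1 - 1 : ℍ[ℝ]) = 1 + 1 := by
    linear_combination (norm := module) hconj + hstar
  norm_num at htwo

theorem mul_eq_of_squareAssociative_star_mul_star (hc : ‖c‖ = 1)
    (h : SquareAssociative fun x y => star x * b * star y * c) (x : ℍ[ℝ]) :
    star c * star x * b * star x * c * star b * x * b * star x =
      star x * b * star c * x * star b * star x * b * star x * c := by
  have hc0 : c ≠ 0 := ne_zero_of_norm_ne_zero (by simp [hc])
  refine mul_right_cancel₀ hc0 ?_
  simpa [mul_assoc] using h x

theorem eq_one_or_neg_one_right_of_forall_star_mul_eq (hb : ‖b‖ = 1) (hc : ‖c‖ = 1)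
    (h : ∀ x, star c * star x * b * star x * c * star b * x * b * star x =
      star x * b * star c * x * star b * star x * b * star x * c) :
    c = 1 ∨ c = -1 := by
  have hb0 : b ≠ 0 := ne_zero_of_norm_ne_zero (by simp [hb])
  have hbc : star c * b * c = b := by
    simpa [mul_assoc, star_mul_self_eq_one hb, star_mul_self_eq_one hc] using h 1
  have hcomm : Commute c b := calc
    c * b = c * (star c * b * c) := by rw [hbc]
    _ = b * c := by rw [mul_assoc, mul_star_cancel_left hc]
  obtain ⟨j, hj, hj_star, hjb, hjc⟩ := exists_imaginary_unit_semiconjBy_star (star b) c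
  rw [star_star] at hjb
  have hjbj : j * b * j = -star b := by
    rw [mul_assoc, ← hjb.eq, ← mul_assoc, hj, neg_one_mul]
  have hjbcj : j * (b * star c) * j = -(star b * c) := by
    rw [mul_assoc, mul_assoc, ← hjc.eq, ← mul_assoc b, ← hjb.eq, mul_assoc, ← mul_assoc, hj,
      neg_one_mul]
  have h_at_j : star b * star b * star b = star b * c * star b * star b * c := calc
    _ = star (star c * b * c) * star b * star b := by rw [hbc]
    _ = star c * (j * b * j) * c * star b * (j * b * j) := by rw [hjbj]; simp [mul_assoc]
    _ = (j * (b * star c) * j) * star b * (j * b * j) * c := by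
        simpa [hj_star, mul_assoc] using h j
    _ = star b * c * star b * star b * c := by rw [hjbj, hjbcj]; simp [mul_assoc]
  have h_square : b * b = star c * b * b * star c := by
    refine star_injective (mul_left_cancel₀ (star_ne_zero.2 hb0) ?_)
    simpa [mul_assoc] using h_at_j
  refine eq_one_or_neg_one_of_star_eq hc (mul_left_cancel₀ (mul_ne_zero hb0 hb0) ?_)
  calc b * b * star c = c * (star c * b * b * star c) := by
        simp only [mul_assoc, mul_star_cancel_left hc]
    _ = c * (b * b) := by rw [← h_square]
    _ = b * b * c := (hcomm.mul_right hcomm).eq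

theorem eq_one_or_neg_one_of_forall_star_mul_eq (hb : ‖b‖ = 1)
    (h : ∀ x, star x * b * star x * star b * x * b * star x =
      star x * b * x * star b * star x * b * star x) :
    b = 1 ∨ b = -1 := by
  obtain ⟨j, hj, hj_star, hjb, -⟩ := exists_imaginary_unit_semiconjBy_star (star b) 0
  have hb0 : b ≠ 0 := ne_zero_of_norm_ne_zero (by simp [hb])
  have hstar0 : star (1 + j) ≠ 0 := star_ne_zero.2 (one_add_ne_zero_of_mul_self_eq_neg_one hj)
  have h_at : star (1 + j) * star b * (1 + j) = (1 + j) * star b * star (1 + j) := by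
    refine mul_left_cancel₀ (mul_ne_zero hstar0 hb0)
      (mul_right_cancel₀ (mul_ne_zero hb0 hstar0) ?_)
    simpa only [mul_assoc] using h (1 + j)
  rw [star_add, star_one, hj_star] at h_at
  have hcomm : Commute j (star b) := by
    have htwo : (2 : ℍ[ℝ]) ≠ 0 := two_ne_zero
    refine mul_left_cancel₀ htwo ?_
    linear_combination (norm := noncomm_ring) -h_at
  refine eq_one_or_neg_one_of_star_eq hb ?_
  simpa only [star_star] using (star_eq_self_of_semiconjBy_of_commute hj hjb hcomm).symm

theorem mulIsomorphic_mul_of_eq_one_or_neg_one (ha : a = 1 ∨ a = -1) (hc : c = 1 ∨ c = -1) :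
    MulIsomorphic (fun x y => a * x * y * c) fun x y : ℍ[ℝ] => x * y := by
  have hneg := mulIsomorphic_neg (m := fun x y : ℍ[ℝ] => x * y) fun x y => neg_mul_neg x y
  rcases ha with rfl | rfl <;> rcases hc with rfl | rfl
  · simpa using MulIsomorphic.refl _
  · simpa using hneg
  · simpa using hneg
  · simpa using MulIsomorphic.refl _

theorem mulIsomorphic_star_mul_star_of_eq_one_or_neg_one (hb : b = 1 ∨ b = -1)
    (hc : c = 1 ∨ c = -1) :
    MulIsomorphic (fun x y => star x * b * star y * c) fun x y : ℍ[ℝ] => star x * star y := by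
  have hneg := mulIsomorphic_neg (m := fun x y : ℍ[ℝ] => star x * star y) fun x y => by simp
  rcases hb with rfl | rfl <;> rcases hc with rfl | rfl
  · simpa using MulIsomorphic.refl _
  · simpa using hneg
  · simpa using hneg
  · simpa using MulIsomorphic.refl _

theorem mulIsomorphic_mul_of_squareAssociative (hp : ‖p‖ = 1) (hu : ‖u‖ = 1) (hs : ‖s‖ = 1)
    (h : SquareAssociative fun x y => p * x * u * y * s) :
    MulIsomorphic (fun x y => p * x * u * y * s) fun x y : ℍ[ℝ] => x * y := by
  have hnormal := mulIsomorphic_mul_mul_mul_mul p s hu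
  have ha : ‖u * p * star u‖ = 1 := by simp [hu, hp]
  have hmul := mul_eq_of_squareAssociative_mul_mul ha hs (hnormal.squareAssociative h)
  refine hnormal.trans ?_
  generalize u * p * star u = a at *
  have hsa : s = a ∨ s = -a := eq_or_eq_neg_of_forall_mul_eq ha hs hmul
  have ha_one : a = 1 ∨ a = -1 := eq_one_or_neg_one_of_forall_mul_eq ha (by
    rcases hsa with rfl | rfl <;> simpa using hmul)
  refine mulIsomorphic_mul_of_eq_one_or_neg_one ha_one ?_
  rcases hsa with rfl | rfl
  · exact ha_one
  · simpa [neg_eq_iff_eq_neg, or_comm] using ha_one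

theorem mulIsomorphic_star_mul_star_of_squareAssociative (hp : ‖p‖ = 1) (hu : ‖u‖ = 1)
    (hs : ‖s‖ = 1) (h : SquareAssociative fun x y => p * star x * u * star y * s) :
    MulIsomorphic (fun x y => p * star x * u * star y * s) fun x y : ℍ[ℝ] => star x * star y := by
  have hnormal := mulIsomorphic_star_mul_star hp u s
  have hb : ‖u * star p‖ = 1 := by simp [hu, hp]
  have hc : ‖s * star p‖ = 1 := by simp [hs, hp]
  have hmul := mul_eq_of_squareAssociative_star_mul_star hc (hnormal.squareAssociative h)
  refine hnormal.trans ?_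
  generalize u * star p = b at *
  generalize s * star p = c at *
  have hc_one : c = 1 ∨ c = -1 := eq_one_or_neg_one_right_of_forall_star_mul_eq hb hc hmul
  have hb_one : b = 1 ∨ b = -1 := eq_one_or_neg_one_of_forall_star_mul_eq hb (by
    rcases hc_one with rfl | rfl <;> simpa using hmul)
  exact mulIsomorphic_star_mul_star_of_eq_one_or_neg_one hb_one hc_one

theorem not_squareAssociative_mul_star_mul_mul_mul (hp : ‖p‖ = 1) (hu : ‖u‖ = 1) (hs : ‖s‖ = 1) :
    ¬ SquareAssociative fun x y => p * star x * u * y * s := fun h =>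
  not_squareAssociative_star_mul hu (by simp [hp, hs])
    ((mulIsomorphic_star_mul hp u s).squareAssociative h)

theorem not_squareAssociative_mul_mul_mul_star_mul (hp : ‖p‖ = 1) (hu : ‖u‖ = 1) (hs : ‖s‖ = 1) :
    ¬ SquareAssociative fun x y => p * x * u * star y * s := fun h =>
  not_squareAssociative_mul_star_mul_mul_mul (by simpa using hs) (by simpa using hu)
    (by simpa using hp) ((mulIsomorphic_swap_mul_star p u s).squareAssociative h.swap)

theorem mulIsomorphic_mul_or_star_mul_star_of_squareAssociative (φ ψ : ℍ[ℝ] ≃ₗᵢ[ℝ] ℍ[ℝ])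
    (h : SquareAssociative fun x y => φ x * ψ y) :
    MulIsomorphic (fun x y => φ x * ψ y) (fun x y : ℍ[ℝ] => x * y) ∨
      MulIsomorphic (fun x y => φ x * ψ y) fun x y : ℍ[ℝ] => star x * star y := by
  obtain ⟨p, q, hp, hq, hφ⟩ := exists_forall_apply_eq_mul_mul_or_mul_star_mul φ
  obtain ⟨r, s, hr, hs, hψ⟩ := exists_forall_apply_eq_mul_mul_or_mul_star_mul ψ
  have hqr : ‖q * r‖ = 1 := by simp [hq, hr]
  have hassoc (x y : ℍ[ℝ]) : p * x * q * (r * y * s) = p * x * (q * r) * y * s := by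
    simp only [mul_assoc]
  rcases hφ with hφ | hφ <;> rcases hψ with hψ | hψ <;> simp only [hφ, hψ, hassoc] at h ⊢
  · exact .inl (mulIsomorphic_mul_of_squareAssociative hp hqr hs h)
  · exact (not_squareAssociative_mul_mul_mul_star_mul hp hqr hs h).elim
  · exact (not_squareAssociative_mul_star_mul_mul_mul hp hqr hs h).elim
  · exact .inr (mulIsomorphic_star_mul_star_of_squareAssociative hp hqr hs h)

end Quaternion

theorem IsNormMultiplicative.mulIsomorphic_mul_or_star_mul_star {E : Type*} [NormedAddCommGroup E]
    [InnerProductSpace ℝ E] {mul : E →ₗ[ℝ] E →ₗ[ℝ] E} (hmul : IsNormMultiplicative mul)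
    (hdim : Module.finrank ℝ E = 4) (h : SquareAssociative fun x y => mul x y) :
    MulIsomorphic (fun x y => mul x y) (fun x y : Quaternion ℝ => x * y) ∨
      MulIsomorphic (fun x y => mul x y) fun x y : Quaternion ℝ => star x * star y := by
  obtain ⟨e, φ, ψ, he⟩ := hmul.exists_quaternion_isotope hdim
  have hisotope : MulIsomorphic (fun x y => mul x y) fun x y => φ x * ψ y :=
    ⟨e.toLinearEquiv, he⟩
  exact (mulIsomorphic_mul_or_star_mul_star_of_squareAssociative φ ψ
    (hisotope.squareAssociative h)).imp hisotope.trans hisotope.trans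

/-- The part of the polarization of `(xx)x = x(xx)` that is odd in `y`, at `y = x²`, is twice
`(x, x², x) = 0`, because `x²` commutes with `x`. -/
theorem squareAssociative_of_forall_apply_apply_self {K V : Type*} [Field K] [CharZero K]
    [AddCommGroup V] [Module K V] {m : V →ₗ[K] V →ₗ[K] V}
    (h : ∀ x, m (m x x) x = m x (m x x)) : SquareAssociative fun x y => m x y := fun x => by
  have h_add := h (x + m x x)
  have h_sub := h (x - m x x)
  simp only [map_add, map_sub, LinearMap.add_apply, LinearMap.sub_apply, h x, h (m x x)]
    at h_add h_sub ⊢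
  linear_combination (norm := module) (1 / 4 : K) • h_add - (1 / 4 : K) • h_sub

theorem star_mul_star_flexible (x y : Quaternion ℝ) :
    star (star x * star y) * star x = star x * star (star y * star x) := by
  simp only [star_mul, star_star]
  rw [mul_assoc, Quaternion.self_mul_star, ← mul_assoc, Quaternion.star_mul_self,
    Quaternion.coe_commutes]

/-- For a 4-dimensional absolute-valued real algebra `A`, the following are equivalent:
flexibility, third power-associativity, the identity `(x, x², x) = 0`, and being
isomorphic to `ℍ` or to `⁎ℍ` (the latter with product `x ⊙ y = x̄ * ȳ`). -/
theorem stmt_8 {A : Type*} [NormedAddCommGroup A] [NormedSpace ℝ A]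
    (mul : A →ₗ[ℝ] A →ₗ[ℝ] A)
    (habs : ∀ x y : A, ‖mul x y‖ = ‖x‖ * ‖y‖)
    (hdim : Module.finrank ℝ A = 4) :
    List.TFAE
      [ ∀ x y : A, mul (mul x y) x = mul x (mul y x),
        ∀ x : A, mul (mul x x) x = mul x (mul x x),
        ∀ x : A, mul (mul x (mul x x)) x = mul x (mul (mul x x) x),
        (∃ e : A ≃ₗ[ℝ] Quaternion ℝ, ∀ x y : A, e (mul x y) = e x * e y) ∨
          (∃ e : A ≃ₗ[ℝ] Quaternion ℝ,
            ∀ x y : A, e (mul x y) = star (e x) * star (e y)) ] := by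
  tfae_have 1 → 2 := fun h x => h x x
  tfae_have 2 → 3 := squareAssociative_of_forall_apply_apply_self
  tfae_have 3 → 4 := fun h => by
    have hmul : IsNormMultiplicative mul := habs
    have : FiniteDimensional ℝ A := .of_finrank_pos (by omega)
    have : Nontrivial A := Module.finrank_pos_iff.1 (by omega : 0 < Module.finrank ℝ A)
    borelize A
    let : InnerProductSpace ℝ A := .ofNorm ℝ hmul.parallelogram
    exact hmul.mulIsomorphic_mul_or_star_mul_star hdim h
  tfae_have 4 → 1 := by
    rintro (⟨e, he⟩ | ⟨e, he⟩) x y <;> apply e.injective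
    · simp only [he, mul_assoc]
    · simp only [he, star_mul_star_flexible]
  tfae_finish
end

section
/- Let A be a 4-dimensional absolute-valued real algebra. Then A satisfies the identity (x, x, x²) = 0 (i.e. (x x)(x²) = x (x x²) for all x ∈ A, where x² = xx) if and only if A is isomorphic to ℍ or to ℍ*. -/
/-!
Left and right multiplications by unit vectors are isometries of an absolute-valued algebra `A`,
so in finite dimension its isometry group is transitive on the unit sphere. An isometry-invariant
positive definite quadratic form, obtained by averaging `ψ ↦ ψ x ^ 2` over the dual unit ball, is
therefore a multiple of `‖x‖ ^ 2`, and the norm is Euclidean. Dividing by the multiplications by a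
unit vector (Kaplansky) gives a unital product, which in dimension 4 is that of `ℍ`; hence
`xy = f x * g y` on `ℍ` with isometries `f` and `g`. By Cartan–Dieudonné an isometry of `ℍ` has the
form `x ↦ a * x * b` or `x ↦ a * star x * b`, and a change of coordinates leaves four families
of products with two parameters. Testing `(x, x, x²) = 0` at `1`, at `v` and at `1 + v` for
`v * v = -1` forces the parameters of two families to be real and rules out the other two.
-/

open MeasureTheory Metric Module Quaternion
open scoped RealInnerProductSpace

section Rotation

variable {E : Type*} [NormedAddCommGroup E] [NormedSpace ℝ E]

/-- Precomposition with an isometry of `E`, as an isometry of the dual. -/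
noncomputable def dualPrecomp (g : E ≃ₗᵢ[ℝ] E) : StrongDual ℝ E ≃ₗᵢ[ℝ] StrongDual ℝ E where
  __ := g.toContinuousLinearEquiv.symm.arrowCongrEquiv (.refl ℝ ℝ)
  map_add' _ _ := rfl
  map_smul' _ _ := rfl
  norm_map' ψ := ψ.opNorm_comp_linearIsometryEquiv g

@[simp] theorem dualPrecomp_apply (g : E ≃ₗᵢ[ℝ] E) (ψ : StrongDual ℝ E) (x : E) :
    dualPrecomp g ψ x = ψ (g x) := rfl

/-- The integral of `ψ x ^ 2` over the unit ball of the dual of `E`: a quadratic form in `x` which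
is invariant under all isometries. The Hausdorff measure is a Haar measure whose invariance under
isometries is immediate. -/
noncomputable def dualBallMoment (x : E) : ℝ :=
  ∫ ψ in closedBall (0 : StrongDual ℝ E) 1, ψ x ^ 2 ∂μH[finrank ℝ (StrongDual ℝ E)]

theorem dualBallMoment_smul (r : ℝ) (x : E) :
    dualBallMoment (r • x) = r ^ 2 * dualBallMoment x := by
  simp only [dualBallMoment, map_smul, smul_eq_mul, mul_pow, integral_const_mul]

theorem dualBallMoment_map (g : E ≃ₗᵢ[ℝ] E) (x : E) :
    dualBallMoment (g x) = dualBallMoment x := by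
  have hball : dualPrecomp g ⁻¹' closedBall 0 1 = closedBall 0 1 := by simp
  have hmp := (dualPrecomp g).toIsometryEquiv.measurePreserving_hausdorffMeasure
    (finrank ℝ (StrongDual ℝ E))
  have := hmp.setIntegral_preimage_emb
    (dualPrecomp g).toHomeomorph.measurableEmbedding (fun ψ => ψ x ^ 2) (closedBall 0 1)
  simpa [dualBallMoment, hball] using this

variable [FiniteDimensional ℝ E]

theorem integrableOn_dual_apply_sq (x : E) :
    IntegrableOn (fun ψ : StrongDual ℝ E => ψ x ^ 2) (closedBall 0 1)
      μH[finrank ℝ (StrongDual ℝ E)] :=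
  have : ProperSpace (StrongDual ℝ E) := FiniteDimensional.proper ℝ _
  Continuous.continuousOn (by fun_prop) |>.integrableOn_compact (isCompact_closedBall _ _)

theorem dualBallMoment_pos {x : E} (hx : x ≠ 0) : 0 < dualBallMoment x := by
  obtain ⟨φ, hφ, hφx⟩ := exists_dual_vector ℝ x (norm_ne_zero_iff.2 hx)
  refine (setIntegral_pos_iff_support_of_nonneg_ae
    (.of_forall fun _ => sq_nonneg _) (integrableOn_dual_apply_sq x)).2 ?_
  let U : Set (StrongDual ℝ E) := {ψ | ψ x ≠ 0} ∩ ball 0 1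
  have hU : IsOpen U := (isOpen_ne_fun (by fun_prop) continuous_const).inter isOpen_ball
  have hφU : (2⁻¹ : ℝ) • φ ∈ U := by
    constructor
    · simp [hφx, hx]
    · rw [mem_ball_zero_iff, norm_smul, hφ]
      norm_num
  refine (hU.measure_pos _ ⟨_, hφU⟩).trans_le (measure_mono ?_)
  exact fun ψ hψ => ⟨pow_ne_zero 2 hψ.1, ball_subset_closedBall hψ.2⟩

theorem dualBallMoment_parallelogram (x y : E) :
    dualBallMoment (x + y) + dualBallMoment (x - y)
      = 2 * (dualBallMoment x + dualBallMoment y) := by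
  have hint := integrableOn_dual_apply_sq (E := E)
  simp only [dualBallMoment]
  rw [← integral_add (hint _) (hint _), ← integral_add (hint _) (hint _), ← integral_const_mul]
  congr with ψ
  simp only [map_add, map_sub]
  ring

theorem parallelogram_of_isometry_transitive
    (htrans : ∀ u v : E, ‖u‖ = 1 → ‖v‖ = 1 → ∃ g : E ≃ₗᵢ[ℝ] E, g u = v) (x y : E) :
    ‖x + y‖ * ‖x + y‖ + ‖x - y‖ * ‖x - y‖ = 2 * (‖x‖ * ‖x‖ + ‖y‖ * ‖y‖) := by
  nontriviality E
  obtain ⟨u, hu⟩ := exists_norm_eq E zero_le_one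
  obtain ⟨c, hc, hmoment⟩ : ∃ c > 0, ∀ z : E, dualBallMoment z = ‖z‖ ^ 2 * c := by
    refine ⟨dualBallMoment u, dualBallMoment_pos (by rintro rfl; simp at hu), fun z => ?_⟩
    rcases eq_or_ne z 0 with rfl | hz
    · simp [dualBallMoment]
    obtain ⟨g, hg⟩ := htrans u (‖z‖⁻¹ • z) hu (norm_smul_inv_norm hz)
    rw [← dualBallMoment_map g u, hg, ← dualBallMoment_smul, smul_inv_smul₀ (norm_ne_zero_iff.2 hz)]
  have hpar := dualBallMoment_parallelogram x y
  simp only [hmoment] at hpar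
  refine mul_right_cancel₀ hc.ne' ?_
  linear_combination hpar

end Rotation

section AbsoluteValued

/-- The bilinear product `mul` makes the normed space `E` an absolute-valued algebra. -/
structure IsAbsoluteValued {E : Type*} [NormedAddCommGroup E] [NormedSpace ℝ E]
    (mul : E →ₗ[ℝ] E →ₗ[ℝ] E) : Prop where
  norm_map (x y : E) : ‖mul x y‖ = ‖x‖ * ‖y‖

namespace IsAbsoluteValued

section NormedSpace

variable {E : Type*} [NormedAddCommGroup E] [NormedSpace ℝ E] {mul : E →ₗ[ℝ] E →ₗ[ℝ] E}

theorem flip (h : IsAbsoluteValued mul) : IsAbsoluteValued mul.flip where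
  norm_map x y := by rw [LinearMap.flip_apply, h.norm_map, mul_comm]

variable [FiniteDimensional ℝ E]

/-- Left multiplication by a unit vector, as an isometry. -/
noncomputable def leftMulIsometry (h : IsAbsoluteValued mul) {u : E} (hu : ‖u‖ = 1) : E ≃ₗᵢ[ℝ] E :=
  LinearIsometry.toLinearIsometryEquiv ⟨mul u, fun x => by rw [h.norm_map, hu, one_mul]⟩ rfl

@[simp] theorem leftMulIsometry_apply (h : IsAbsoluteValued mul) {u : E} (hu : ‖u‖ = 1) (x : E) :
    h.leftMulIsometry hu x = mul u x := rfl

theorem exists_isometry_map_eq (h : IsAbsoluteValued mul) {u v : E} (hu : ‖u‖ = 1)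
    (hv : ‖v‖ = 1) : ∃ g : E ≃ₗᵢ[ℝ] E, g u = v := by
  obtain ⟨z, hz⟩ := (h.flip.leftMulIsometry hu).surjective v
  have hz_norm : ‖z‖ = 1 := by rw [← hv, ← hz, LinearIsometryEquiv.norm_map]
  exact ⟨h.leftMulIsometry hz_norm, hz⟩

theorem parallelogram (h : IsAbsoluteValued mul) (x y : E) :
    ‖x + y‖ * ‖x + y‖ + ‖x - y‖ * ‖x - y‖ = 2 * (‖x‖ * ‖x‖ + ‖y‖ * ‖y‖) :=
  parallelogram_of_isometry_transitive (fun _ _ => h.exists_isometry_map_eq) x y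

end NormedSpace

theorem inner_map_map_left {E : Type*} [NormedAddCommGroup E] [InnerProductSpace ℝ E]
    {mul : E →ₗ[ℝ] E →ₗ[ℝ] E} (h : IsAbsoluteValued mul) (x y z : E) :
    ⟪mul x y, mul x z⟫ = ‖x‖ ^ 2 * ⟪y, z⟫ := by
  have hsq := congrArg (· ^ 2) (h.norm_map x (y + z))
  simp only [map_add, mul_pow, norm_add_sq_real, h.norm_map] at hsq
  linarith

end IsAbsoluteValued

end AbsoluteValued

section Unital

variable {E : Type*} [NormedAddCommGroup E] [InnerProductSpace ℝ E]

/-- `C` is an absolute-valued product with two-sided unit `e`. -/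
structure IsUnitalAbsoluteValued (C : E →ₗ[ℝ] E →ₗ[ℝ] E) (e : E) : Prop extends
    IsAbsoluteValued C where
  unit_left (y : E) : C e y = y
  unit_right (x : E) : C x e = x

namespace IsUnitalAbsoluteValued

variable {C : E →ₗ[ℝ] E →ₗ[ℝ] E} {e : E}

theorem flip (h : IsUnitalAbsoluteValued C e) : IsUnitalAbsoluteValued C.flip e where
  toIsAbsoluteValued := h.toIsAbsoluteValued.flip
  unit_left := h.unit_right
  unit_right := h.unit_left

theorem norm_unit [Nontrivial E] (h : IsUnitalAbsoluteValued C e) : ‖e‖ = 1 := by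
  obtain ⟨x, hx⟩ := exists_ne (0 : E)
  have hnorm := h.norm_map e x
  rw [h.unit_left] at hnorm
  exact (mul_eq_right₀ (norm_ne_zero_iff.2 hx)).1 hnorm.symm

theorem inner_map_left (h : IsUnitalAbsoluteValued C e) {x : E} (hx : ⟪x, e⟫ = 0) (y z : E) :
    ⟪C x y, z⟫ = -⟪y, C x z⟫ := by
  have hsum := h.inner_map_map_left (x + e) y z
  have he := h.inner_map_map_left e y z
  simp only [map_add, LinearMap.add_apply, h.unit_left, inner_add_left, inner_add_right,
    norm_add_sq_real, hx, h.inner_map_map_left x y z] at hsum he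
  linarith

theorem inner_self_map_left (h : IsUnitalAbsoluteValued C e) (x y : E) :
    ⟪x, C x y⟫ = ‖x‖ ^ 2 * ⟪e, y⟫ := by
  simpa only [h.unit_right] using h.inner_map_map_left x e y

theorem inner_self_map_right (h : IsUnitalAbsoluteValued C e) (x y : E) :
    ⟪y, C x y⟫ = ‖y‖ ^ 2 * ⟪e, x⟫ :=
  h.flip.inner_self_map_left y x

theorem map_map_left (h : IsUnitalAbsoluteValued C e) {x : E} (hx : ⟪x, e⟫ = 0) (y : E) :
    C x (C x y) = -(‖x‖ ^ 2 • y) :=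
  ext_inner_right ℝ fun z => by
    rw [h.inner_map_left hx, h.inner_map_map_left, inner_neg_left, real_inner_smul_left]

theorem map_map_right (h : IsUnitalAbsoluteValued C e) {x : E} (hx : ⟪x, e⟫ = 0) (y : E) :
    C (C y x) x = -(‖x‖ ^ 2 • y) :=
  h.flip.map_map_left hx y

theorem map_self (h : IsUnitalAbsoluteValued C e) {x : E} (hx : ⟪x, e⟫ = 0) :
    C x x = -(‖x‖ ^ 2 • e) := by
  simpa only [h.unit_right] using h.map_map_left hx e

theorem map_swap (h : IsUnitalAbsoluteValued C e) {x y : E} (hx : ⟪x, e⟫ = 0) (hy : ⟪y, e⟫ = 0)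
    (hxy : ⟪x, y⟫ = 0) : C y x = -C x y := by
  have hsum := h.map_self (x := x + y) (by rw [inner_add_left, hx, hy, add_zero])
  simp only [map_add, LinearMap.add_apply, h.map_self hx, h.map_self hy, norm_add_sq_real, hxy]
    at hsum
  rw [eq_neg_iff_add_eq_zero]
  linear_combination (norm := module) hsum

theorem orthonormal_vecCons_map (h : IsUnitalAbsoluteValued C e) {i j : E}
    (hon : Orthonormal ℝ ![e, i, j]) : Orthonormal ℝ ![e, i, j, C i j] := by
  simp only [orthonormal_vecCons_iff, Fin.forall_fin_succ, Matrix.cons_val_zero,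
    Matrix.cons_val_succ] at hon ⊢
  obtain ⟨he_norm, ⟨hei, hej, -⟩, hi_norm, ⟨hij, -⟩, hj_norm, -⟩ := hon
  have hek : ⟪e, C i j⟫ = 0 := by
    rw [real_inner_comm, h.inner_map_left (by rwa [real_inner_comm]), h.unit_right,
      real_inner_comm, hij, neg_zero]
  simp [*, h.norm_map, h.inner_self_map_left, h.inner_self_map_right]

theorem exists_orthonormalBasis (h : IsUnitalAbsoluteValued C e) (hdim : finrank ℝ E = 4) :
    ∃ b : OrthonormalBasis (Fin 4) ℝ E, b 0 = e ∧ C (b 1) (b 2) = b 3 := by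
  have : FiniteDimensional ℝ E := .of_finrank_pos (by lia)
  have : Nontrivial E := nontrivial_of_finrank_pos (R := ℝ) (by lia)
  have he := h.norm_unit
  have hcard : finrank ℝ E = Fintype.card (Fin 4) := by rw [hdim, Fintype.card_fin]
  obtain ⟨b, hb⟩ := Orthonormal.exists_orthonormalBasis_extension_of_card_eq hcard
    (v := fun _ => e) (s := {0}) (by simpa [orthonormal_iff_ite])
  have hon : Orthonormal ℝ ![e, b 1, b 2] := by
    have := b.orthonormal.comp ![0, 1, 2] (by decide)
    convert this using 1
    ext i; fin_cases i <;> simp [hb 0 rfl]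
  obtain ⟨b', hb'⟩ := Orthonormal.exists_orthonormalBasis_extension_of_card_eq hcard
    (v := ![e, b 1, b 2, C (b 1) (b 2)]) (s := Set.univ)
    ((h.orthonormal_vecCons_map hon).comp _ Subtype.val_injective)
  exact ⟨b', by simp [hb']⟩

theorem exists_quaternion_isometry (h : IsUnitalAbsoluteValued C e) (hdim : finrank ℝ E = 4) :
    ∃ φ : E ≃ₗᵢ[ℝ] ℍ[ℝ], ∀ x y, φ (C x y) = φ x * φ y := by
  obtain ⟨b, rfl, hb⟩ := h.exists_orthonormalBasis hdim
  let ψ := linearIsometryEquivTuple.trans b.repr.symm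
  have hψ (q : ℍ[ℝ]) : ψ q = q.re • b 0 + q.imI • b 1 + q.imJ • b 2 + q.imK • b 3 := by
    simp [ψ, Fin.sum_univ_four, ← OrthonormalBasis.sum_repr_symm]
  have hmul (p q : ℍ[ℝ]) : ψ (p * q) = C (ψ p) (ψ q) := by
    have hsq (i : Fin 4) (hi : i ≠ 0) : C (b i) (b i) = -b 0 := by
      simp [h.map_self (b.inner_eq_zero hi)]
    have hswap (i j : Fin 4) (hi : i ≠ 0) (hj : j ≠ 0) (hij : i ≠ j) :
        C (b j) (b i) = -C (b i) (b j) :=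
      h.map_swap (b.inner_eq_zero hi) (b.inner_eq_zero hj) (b.inner_eq_zero hij)
    have h13 : C (b 1) (b 3) = -b 2 := by
      simp [← hb, h.map_map_left (b.inner_eq_zero (i := 1) (j := 0) (by decide))]
    have h32 : C (b 3) (b 2) = -b 1 := by
      simp [← hb, h.map_map_right (b.inner_eq_zero (i := 2) (j := 0) (by decide))]
    have h21 : C (b 2) (b 1) = -b 3 := by simp [hswap 1 2, hb]
    have h31 : C (b 3) (b 1) = b 2 := by simp [hswap 1 3, h13]
    have h23 : C (b 2) (b 3) = b 1 := by simp [hswap 3 2, h32]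
    simp only [hψ, map_add, map_smul, LinearMap.add_apply, LinearMap.smul_apply, h.unit_left,
      h.unit_right, hb, h13, h32, h21, h31, h23, hsq 1 (by decide), hsq 2 (by decide),
      hsq 3 (by decide), Quaternion.re_mul, Quaternion.imI_mul, Quaternion.imJ_mul,
      Quaternion.imK_mul]
    module
  exact ⟨ψ.symm, fun x y => by rw [ψ.symm_apply_eq, hmul]; simp⟩

end IsUnitalAbsoluteValued

end Unital

section QuaternionIsometry

/-- The maps `x ↦ a * x * b` and `x ↦ a * star x * b` of `ℍ` with `a` and `b` nonzero. The family
contains all linear isometries and is closed under composition. -/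
def IsTwistedMul (f : ℍ[ℝ] → ℍ[ℝ]) : Prop :=
  ∃ a b : ℍ[ℝ], a ≠ 0 ∧ b ≠ 0 ∧ ((∀ x, f x = a * x * b) ∨ ∀ x, f x = a * star x * b)

theorem isTwistedMul_id : IsTwistedMul id :=
  ⟨1, 1, one_ne_zero, one_ne_zero, .inl fun x => by simp⟩

theorem IsTwistedMul.comp {f g : ℍ[ℝ] → ℍ[ℝ]} (hf : IsTwistedMul f) (hg : IsTwistedMul g) :
    IsTwistedMul (f ∘ g) := by
  obtain ⟨a, b, ha, hb, hf | hf⟩ := hf <;> obtain ⟨c, d, hc, hd, hg | hg⟩ := hg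
  · exact ⟨a * c, d * b, mul_ne_zero ha hc, mul_ne_zero hd hb,
      .inl fun x => by simp [hf, hg, mul_assoc]⟩
  · exact ⟨a * c, d * b, mul_ne_zero ha hc, mul_ne_zero hd hb,
      .inr fun x => by simp [hf, hg, mul_assoc]⟩
  · exact ⟨a * star d, star c * b, by simp [ha, hd], by simp [hb, hc],
      .inr fun x => by simp [hf, hg, mul_assoc]⟩
  · exact ⟨a * star d, star c * b, by simp [ha, hd], by simp [hb, hc],
      .inl fun x => by simp [hf, hg, mul_assoc]⟩

theorem reflection_orthogonal_singleton_quaternion {v : ℍ[ℝ]} (hv : v ≠ 0) (x : ℍ[ℝ]) :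
    (ℝ ∙ v)ᗮ.reflection x = -v * star x * (star v)⁻¹ := by
  have hv' : star v ≠ 0 := by simpa
  have hpolar : v * star x + x * star v = ((2 * ⟪v, x⟫ : ℝ) : ℍ[ℝ]) := by
    simpa [Quaternion.inner_def] using Quaternion.self_add_star' (v * star x)
  have hproj : (2 • (⟪v, x⟫ / ‖v‖ ^ 2) • v) * star v = v * star x + x * star v := by
    have : ‖v‖ ≠ 0 := norm_ne_zero_iff.2 hv
    rw [← Nat.cast_smul_eq_nsmul ℝ, smul_smul, smul_mul_assoc, self_mul_star,
      normSq_eq_norm_mul_self, smul_coe, hpolar]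
    congr 1
    push_cast
    field_simp
  rw [eq_mul_inv_iff_mul_eq₀ hv', Submodule.reflection_orthogonal_apply,
    Submodule.reflection_singleton_apply, neg_mul, sub_mul]
  simp only [RCLike.ofReal_real_eq_id, id_eq, hproj]
  noncomm_ring

theorem isTwistedMul_of_isometry (f : ℍ[ℝ] ≃ₗᵢ[ℝ] ℍ[ℝ]) : IsTwistedMul f := by
  obtain ⟨l, -, rfl⟩ := f.reflections_generate_dim
  induction l with
  | nil => exact isTwistedMul_id
  | cons v l ih =>
    rw [List.map_cons, List.prod_cons]
    change IsTwistedMul ((ℝ ∙ v)ᗮ.reflection ∘ _)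
    refine .comp ?_ ih
    rcases eq_or_ne v 0 with rfl | hv
    · convert isTwistedMul_id
      ext1 x
      exact Submodule.reflection_mem_subspace_eq_self (by simp)
    · exact ⟨-v, (star v)⁻¹, by simpa, by simpa,
        .inr (reflection_orthogonal_singleton_quaternion hv)⟩

end QuaternionIsometry

section ImaginaryUnit

variable {v q : ℍ[ℝ]}

theorem mul_self_eq_neg_one_iff : v * v = -1 ↔ v.re = 0 ∧ normSq v = 1 := by
  constructor
  · intro hv
    have hnorm : normSq v * normSq v = 1 := by rw [← map_mul, hv, normSq_neg, map_one]
    have hnorm' : normSq v = 1 := by nlinarith [normSq_nonneg (a := v)]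
    exact ⟨sq_eq_neg_normSq.1 (by simp [pow_two, hv, hnorm']), hnorm'⟩
  · rintro ⟨hre, hnorm⟩
    rw [← pow_two, sq_eq_neg_normSq.2 hre, hnorm, coe_one]

theorem ne_zero_of_mul_self_eq_neg_one (hv : v * v = -1) : v ≠ 0 := by
  rintro rfl
  simp at hv

theorem star_eq_neg_of_mul_self_eq_neg_one (hv : v * v = -1) : star v = -v :=
  Quaternion.star_eq_neg.2 (mul_self_eq_neg_one_iff.1 hv).1

theorem exists_unit_imI_unit_imJ : ∃ i j : ℍ[ℝ], i * i = -1 ∧ j * j = -1 ∧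
    (i.re = 0 ∧ i.imI = 1 ∧ i.imJ = 0 ∧ i.imK = 0) ∧
    (j.re = 0 ∧ j.imI = 0 ∧ j.imJ = 1 ∧ j.imK = 0) := by
  let i : ℍ[ℝ] := ⟨0, 1, 0, 0⟩
  let j : ℍ[ℝ] := ⟨0, 0, 1, 0⟩
  refine ⟨i, j, ?_, ?_, ⟨rfl, rfl, rfl, rfl⟩, ⟨rfl, rfl, rfl, rfl⟩⟩
  · exact mul_self_eq_neg_one_iff.2 ⟨rfl, (normSq_def' i).trans (by simp [i])⟩
  · exact mul_self_eq_neg_one_iff.2 ⟨rfl, (normSq_def' j).trans (by simp [j])⟩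

theorem exists_mul_self_eq_neg_one_commute (q : ℍ[ℝ]) : ∃ v : ℍ[ℝ], v * v = -1 ∧ Commute v q := by
  by_cases him : q.im = 0
  · obtain ⟨i, -, hi_sq, -⟩ := exists_unit_imI_unit_imJ
    refine ⟨i, hi_sq, ?_⟩
    rw [← q.re_add_im, him, add_zero]
    exact (coe_commute _ _).symm
  · have hnorm : normSq q.im ≠ 0 := normSq_ne_zero.2 him
    refine ⟨‖q.im‖⁻¹ • q.im, mul_self_eq_neg_one_iff.2 ⟨by simp, ?_⟩, ?_⟩
    · rw [normSq_smul, inv_pow, pow_two, ← normSq_eq_norm_mul_self, inv_mul_cancel₀ hnorm]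
    · have : Commute q.im q := by
        conv_rhs => rw [← q.re_add_im]
        exact .add_right (coe_commute _ _).symm (.refl _)
      exact this.smul_left _

theorem exists_coe_eq_of_commute (h : ∀ v : ℍ[ℝ], v * v = -1 → Commute v q) :
    ∃ r : ℝ, (r : ℍ[ℝ]) = q := by
  obtain ⟨i, j, hi_sq, hj_sq, hi, hj⟩ := exists_unit_imI_unit_imJ
  have hi_comm := (h i hi_sq).eq
  have hj_comm := (h j hj_sq).eq
  simp only [Quaternion.ext_iff, Quaternion.re_mul, Quaternion.imI_mul, Quaternion.imJ_mul,
    Quaternion.imK_mul, hi, hj, zero_mul, mul_zero, one_mul, mul_one] at hi_comm hj_comm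
  exact ⟨q.re, by ext <;> simp <;> linarith⟩

instance inst_s9 : CharZero ℍ[ℝ] := algebraRat.charZero ℍ[ℝ]

theorem eq_zero_of_anticommute (h : ∀ v : ℍ[ℝ], v * v = -1 → v * q = -(q * v)) : q = 0 := by
  obtain ⟨v, hv, hvq⟩ := exists_mul_self_eq_neg_one_commute q
  have hzero : q * v = 0 := self_eq_neg.1 (hvq.eq ▸ h v hv)
  exact (mul_eq_zero.1 hzero).resolve_right (ne_zero_of_mul_self_eq_neg_one hv)

end ImaginaryUnit

section Identity

/-- The identity `(x, x, x²) = 0`: left alternativity `(x, x, y) = 0` at `y = x²`. -/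
def LeftAlternativeAtSq {E : Type*} (P : E → E → E) : Prop :=
  ∀ x, P (P x x) (P x x) = P x (P x (P x x))

/-- Real algebras with products `P` and `Q` are isomorphic. -/
def IsomorphicProducts {E F : Type*} [AddCommGroup E] [Module ℝ E] [AddCommGroup F] [Module ℝ F]
    (P : E → E → E) (Q : F → F → F) : Prop :=
  ∃ e : E ≃ₗ[ℝ] F, ∀ x y, e (P x y) = Q (e x) (e y)

namespace IsomorphicProducts

variable {E F G : Type*} [AddCommGroup E] [Module ℝ E] [AddCommGroup F] [Module ℝ F]
  [AddCommGroup G] [Module ℝ G] {P : E → E → E} {Q : F → F → F} {R : G → G → G}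

theorem trans (hPQ : IsomorphicProducts P Q) (hQR : IsomorphicProducts Q R) :
    IsomorphicProducts P R := by
  obtain ⟨e, he⟩ := hPQ
  obtain ⟨f, hf⟩ := hQR
  exact ⟨e.trans f, fun x y => by simp [he, hf]⟩

theorem leftAlternativeAtSq_iff (h : IsomorphicProducts P Q) :
    LeftAlternativeAtSq P ↔ LeftAlternativeAtSq Q := by
  obtain ⟨e, he⟩ := h
  simp only [LeftAlternativeAtSq, ← e.injective.eq_iff, he, e.surjective.forall]

end IsomorphicProducts

theorem leftAlternativeAtSq_mul {M : Type*} [Semigroup M] :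
    LeftAlternativeAtSq fun x y : M => x * y :=
  fun x => mul_assoc x x (x * x)

theorem leftAlternativeAtSq_mul_star : LeftAlternativeAtSq fun x y : ℍ[ℝ] => x * star y := by
  intro x
  simp only [self_mul_star, star_coe, mul_coe_eq_smul, Quaternion.star_smul, mul_smul_comm]

variable {a b : ℍ[ℝ]}

theorem isomorphicProducts_mul_of_leftAlternativeAtSq (ha : a ≠ 0) (hb : b ≠ 0)
    (h : LeftAlternativeAtSq fun x y => a * x * y * b) :
    IsomorphicProducts (fun x y => a * x * y * b) fun x y : ℍ[ℝ] => x * y := by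
  have hid (x : ℍ[ℝ]) : a * (x * x) * b * a * (x * x) = x * a * x * a * (x * x) * b := by
    refine mul_left_cancel₀ ha (mul_right_cancel₀ hb (mul_right_cancel₀ hb ?_))
    simpa only [mul_assoc] using h x
  have hba : b * a = a * b := by
    have h_one := hid 1
    simp only [mul_one, one_mul, mul_assoc] at h_one
    exact mul_left_cancel₀ ha h_one
  obtain ⟨r, rfl⟩ : ∃ r : ℝ, (r : ℍ[ℝ]) = a := exists_coe_eq_of_commute fun v hv => by
    have hconj : a = -(v * a * v) := by
      refine mul_right_cancel₀ (mul_ne_zero ha hb) ?_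
      simpa [hv, mul_assoc, hba] using hid v
    calc v * a = -(v * v) * a * v := by
          conv_lhs => rw [hconj]
          noncomm_ring
      _ = a * v := by rw [hv, neg_neg, one_mul]
  have hr : r ≠ 0 := by rintro rfl; simp at ha
  obtain ⟨s, rfl⟩ : ∃ s : ℝ, (s : ℍ[ℝ]) = b := exists_coe_eq_of_commute fun v hv => by
    have hsq : (1 + v) * (1 + v) = (2 : ℝ) • v := by
      rw [add_mul, mul_add, mul_add, hv, mul_one, mul_one, one_mul]; module
    have hcomm := hid (1 + v)
    simp only [coe_mul_eq_smul, mul_coe_eq_smul, smul_mul_assoc, mul_smul_comm, hsq, smul_smul,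
      mul_assoc] at hcomm
    refine mul_left_cancel₀ (ne_zero_of_mul_self_eq_neg_one hv) ?_
    refine smul_right_injective ℍ[ℝ] (by positivity : 4 * (r * r) ≠ 0) ?_
    linear_combination (norm := module) -hcomm
  have hs : s ≠ 0 := by rintro rfl; simp at hb
  refine ⟨.smulOfNeZero ℝ _ (r * s) (mul_ne_zero hr hs), fun x y => ?_⟩
  simp [coe_mul_eq_smul, mul_coe_eq_smul, smul_smul]

theorem isomorphicProducts_mul_star_of_leftAlternativeAtSq (ha : a ≠ 0) (hb : b ≠ 0)
    (h : LeftAlternativeAtSq fun x y => a * x * b * star y) :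
    IsomorphicProducts (fun x y => a * x * b * star y) fun x y : ℍ[ℝ] => x * star y := by
  have hid {x : ℍ[ℝ]} (hx : x ≠ 0) : a * x * b * star x * b * x = x * b * a * x * b * star x := by
    refine mul_left_cancel₀ ha (mul_right_cancel₀
      (by simp [ha, hb, hx] : star b * star x * star a ≠ 0) ?_)
    simpa only [mul_assoc, star_mul, star_star] using h x
  have hba : b * a = a * b := by
    have h_one := hid one_ne_zero
    simp only [mul_one, one_mul, star_one] at h_one
    exact (mul_right_cancel₀ hb h_one).symm
  obtain ⟨r, rfl⟩ : ∃ r : ℝ, (r : ℍ[ℝ]) = a := exists_coe_eq_of_commute fun v hv => by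
    have hv0 := ne_zero_of_mul_self_eq_neg_one hv
    refine mul_right_cancel₀ (by simp [hb, hv0] : b * v * b * v ≠ 0) ?_
    simpa [star_eq_neg_of_mul_self_eq_neg_one hv, mul_assoc, ← mul_assoc b a, hba]
      using (hid hv0).symm
  have hr : r ≠ 0 := by rintro rfl; simp at ha
  obtain ⟨s, rfl⟩ : ∃ s : ℝ, (s : ℍ[ℝ]) = b := exists_coe_eq_of_commute fun v hv => by
    have hne : 1 + v ≠ 0 := fun h0 => by
      have hre := congrArg (·.re) h0
      simp [(mul_self_eq_neg_one_iff.1 hv).1] at hre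
    have hcomm : (1 - v) * b * (1 + v) = (1 + v) * b * (1 - v) := by
      refine mul_left_cancel₀ (mul_ne_zero ha (mul_ne_zero hne hb)) ?_
      simpa only [star_add, star_one, star_eq_neg_of_mul_self_eq_neg_one hv, ← sub_eq_add_neg,
        mul_assoc, ← coe_commutes r] using hid hne
    refine mul_left_cancel₀ (by norm_num : (2 : ℍ[ℝ]) ≠ 0) ?_
    linear_combination (norm := noncomm_ring) -hcomm
  have hs : s ≠ 0 := by rintro rfl; simp at hb
  refine ⟨.smulOfNeZero ℝ _ (r * s) (mul_ne_zero hr hs), fun x y => ?_⟩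
  simp [coe_mul_eq_smul, mul_coe_eq_smul, smul_smul]

theorem not_leftAlternativeAtSq_star_mul (ha : a ≠ 0) (hb : b ≠ 0) :
    ¬ LeftAlternativeAtSq fun x y => star x * a * y * b := by
  intro h
  obtain ⟨v, hv, hva⟩ := exists_mul_self_eq_neg_one_commute a
  have hstar := star_eq_neg_of_mul_self_eq_neg_one hv
  have hconj : star v * a * v = a := by
    rw [hstar, mul_assoc, ← hva.eq, ← mul_assoc, neg_mul, hv, neg_neg, one_mul]
  have hconj_star : star v * a * star v = -a := by
    conv_lhs => rw [hstar, mul_neg, ← hstar, hconj]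
  have h_one : star (a * b) * a * (a * b) * b = a * (a * (a * b) * b) * b := by
    simpa only [star_one, one_mul, mul_one] using h 1
  have h_unit : star (a * b) * a * (a * b) * b = -(a * (a * (a * b) * b) * b) := by
    calc star (a * b) * a * (a * b) * b
        = star (star v * a * v * b) * a * (star v * a * v * b) * b := by rw [hconj]
      _ = star v * a * (star v * a * (star v * a * v * b) * b) * b := h v
      _ = star v * a * star v * a * (star v * a * v) * b * b * b := by simp only [mul_assoc]
      _ = -(a * (a * (a * b) * b) * b) := by rw [hconj, hconj_star]; noncomm_ring
  have hzero := self_eq_neg.1 (h_one.symm.trans h_unit)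
  simp [ha, hb] at hzero

theorem not_leftAlternativeAtSq_star_mul_star (ha : a ≠ 0) (hb : b ≠ 0) :
    ¬ LeftAlternativeAtSq fun x y => a * star x * star y * b := by
  intro h
  have hid (x : ℍ[ℝ]) : star b * (x * x) * star a * star b * (x * x)
      = star x * (star b * a) * star (x * x) * b * x := by
    refine mul_left_cancel₀ ha (mul_right_cancel₀ (by simp [ha, hb] : star a * b ≠ 0) ?_)
    simpa only [mul_assoc, star_mul, star_star] using h x
  have h_one : star b * star a * star b = star b * a * b := by simpa [mul_assoc] using hid 1
  have hzero : star b * a * b = 0 := eq_zero_of_anticommute fun v hv => by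
    have hconj : star b * a * b = v * (star b * a * b) * v := by
      simpa [hv, star_eq_neg_of_mul_self_eq_neg_one hv, ← h_one, mul_assoc] using hid v
    calc v * (star b * a * b) = v * v * (star b * a * b * v) := by
          conv_lhs => rw [hconj]
          noncomm_ring
      _ = -(star b * a * b * v) := by rw [hv, neg_one_mul]
  simp [ha, hb] at hzero

end Identity

section NormalForm

variable {A : Type*} [NormedAddCommGroup A] [NormedSpace ℝ A] {mul : A →ₗ[ℝ] A →ₗ[ℝ] A}

theorem IsAbsoluteValued.exists_quaternion_isotopy (h : IsAbsoluteValued mul)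
    (hdim : finrank ℝ A = 4) :
    ∃ (φ : A ≃ₗᵢ[ℝ] ℍ[ℝ]) (f g : ℍ[ℝ] ≃ₗᵢ[ℝ] ℍ[ℝ]), ∀ x y, φ (mul x y) = f (φ x) * g (φ y) := by
  have : FiniteDimensional ℝ A := .of_finrank_pos (by lia)
  have : Nontrivial A := nontrivial_of_finrank_pos (R := ℝ) (by lia)
  obtain ⟨u, hu⟩ := exists_norm_eq A zero_le_one
  let L := h.leftMulIsometry hu
  let R := h.flip.leftMulIsometry hu
  let : InnerProductSpace ℝ A := .ofNorm ℝ h.parallelogram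
  let C := mul.compl₁₂ (R.symm : A →ₗ[ℝ] A) (L.symm : A →ₗ[ℝ] A)
  have hC : IsUnitalAbsoluteValued C (mul u u) := {
    norm_map x y := by simp [C, h.norm_map]
    unit_left y := by
      have : R.symm (mul u u) = u := R.symm_apply_apply u
      exact (congrArg (mul · _) this).trans (L.apply_symm_apply y)
    unit_right x := by
      have : L.symm (mul u u) = u := L.symm_apply_apply u
      exact (congrArg (mul _) this).trans (R.apply_symm_apply x) }
  obtain ⟨φ, hφ⟩ := hC.exists_quaternion_isometry hdim
  refine ⟨φ, (φ.symm.trans R).trans φ, (φ.symm.trans L).trans φ, fun x y => ?_⟩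
  simp [← hφ, C]

theorem IsAbsoluteValued.exists_normalForm (h : IsAbsoluteValued mul) (hdim : finrank ℝ A = 4) :
    ∃ a b : ℍ[ℝ], a ≠ 0 ∧ b ≠ 0 ∧
      (IsomorphicProducts (mul · ·) (fun x y => a * x * y * b) ∨
        IsomorphicProducts (mul · ·) (fun x y => a * x * b * star y) ∨
        IsomorphicProducts (mul · ·) (fun x y => star x * a * y * b) ∨
        IsomorphicProducts (mul · ·) (fun x y => a * star x * star y * b)) := by
  obtain ⟨φ, f, g, hφ⟩ := h.exists_quaternion_isotopy hdim
  obtain ⟨a, b, ha, hb, hf⟩ := isTwistedMul_of_isometry f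
  obtain ⟨c, d, hc, hd, hg⟩ := isTwistedMul_of_isometry g
  have hm : b * c ≠ 0 := mul_ne_zero hb hc
  rcases hf with hf | hf <;> rcases hg with hg | hg
  · exact ⟨a, (b * c)⁻¹ * d * (b * c), ha, by simp [hb, hc, hd],
      .inl ⟨φ.toLinearEquiv.trans (Units.mulRightLinearEquiv ℝ (.mk0 _ hm)),
        fun x y => by simp [hφ, hf, hg, mul_assoc, hb, hc]⟩⟩
  · exact ⟨a, d * (b * c) * star d, ha, by simp [hb, hc, hd],
      .inr <| .inl ⟨φ.toLinearEquiv.trans (Units.mulRightLinearEquiv ℝ (.mk0 _ (inv_ne_zero hd))),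
        fun x y => by simp [hφ, hf, hg, mul_assoc, hd]⟩⟩
  · exact ⟨star a * (b * c) * a, d, by simp [ha, hb, hc], hd,
      .inr <| .inr <| .inl
        ⟨φ.toLinearEquiv.trans (Units.mulLeftLinearEquiv ℝ _ (.mk0 _ (inv_ne_zero ha))),
          fun x y => by simp [hφ, hf, hg, mul_assoc, ha]⟩⟩
  · exact ⟨star (b * c) * a, (b * c)⁻¹ * d, by simp [ha, hb, hc], by simp [hb, hc, hd],
      .inr <| .inr <| .inr
        ⟨φ.toLinearEquiv.trans (Units.mulLeftLinearEquiv ℝ _ (.mk0 _ (star_ne_zero.2 hm))),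
          fun x y => by simp [hφ, hf, hg, mul_assoc, hb, hc]⟩⟩

end NormalForm

/-- A 4-dimensional absolute-valued real algebra satisfies the identity `(x, x, x²) = 0`
if and only if it is isomorphic to `ℍ` or to `ℍ*` (product `x ⊙ y = x * ȳ`). -/
theorem stmt_9 {A : Type*} [NormedAddCommGroup A] [NormedSpace ℝ A]
    (mul : A →ₗ[ℝ] A →ₗ[ℝ] A)
    (habs : ∀ x y : A, ‖mul x y‖ = ‖x‖ * ‖y‖)
    (hdim : Module.finrank ℝ A = 4) :
    (∀ x : A, mul (mul x x) (mul x x) = mul x (mul x (mul x x)))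
      ↔ ((∃ e : A ≃ₗ[ℝ] Quaternion ℝ, ∀ x y : A, e (mul x y) = e x * e y) ∨
          (∃ e : A ≃ₗ[ℝ] Quaternion ℝ,
            ∀ x y : A, e (mul x y) = e x * star (e y))) := by
  change LeftAlternativeAtSq (mul · ·) ↔ IsomorphicProducts (mul · ·) (fun x y : ℍ[ℝ] => x * y) ∨
    IsomorphicProducts (mul · ·) fun x y : ℍ[ℝ] => x * star y
  constructor
  · intro hid
    obtain ⟨a, b, ha, hb, h | h | h | h⟩ := IsAbsoluteValued.exists_normalForm ⟨habs⟩ hdim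
    all_goals have hid' := h.leftAlternativeAtSq_iff.1 hid
    · exact .inl (h.trans (isomorphicProducts_mul_of_leftAlternativeAtSq ha hb hid'))
    · exact .inr (h.trans (isomorphicProducts_mul_star_of_leftAlternativeAtSq ha hb hid'))
    · exact (not_leftAlternativeAtSq_star_mul ha hb hid').elim
    · exact (not_leftAlternativeAtSq_star_mul_star ha hb hid').elim
  · rintro (h | h)
    · exact h.leftAlternativeAtSq_iff.2 leftAlternativeAtSq_mul
    · exact h.leftAlternativeAtSq_iff.2 leftAlternativeAtSq_mul_star
end
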